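/- Let θ > 0, ν > 0 and let k ≥ 1 be an integer. With p_i = θ/(θ+i−1), set s_1(k+1,k+j) = (∏_{i=k+1}^{k+j} (1−p_i)) · (∑_{i=k+1}^{k+j} p_i/(1−p_i)) for j ≥ 0. Then the function x ↦ (1−x)^{k+ν} ∑_{j≥0} ((ν+k)_j / j!) x^j s_1(k+1, k+j) is unimodal on [0,1): there exists x* ∈ [0,1) such that the function is nondecreasing on [0, x*] and nonincreasing on [x*, 1). -/

import Mathlib

/-- The rising factorial (Pochhammer symbol): `(y)_j = y(y+1)⋯(y+j-1)`, `(y)_0 = 1`. -/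
noncomputable def risingFactorial (y : ℝ) : ℕ → ℝ
  | 0 => 1
  | m + 1 => risingFactorial y m * (y + m)

/-- `s₁(k+1, k+j)` for the profile `p_i = θ/(θ+i-1)`: probability of exactly
one success among trials `k+1, …, k+j`. -/
noncomputable def s1 (θ : ℝ) (k j : ℕ) : ℝ :=
  (∏ i ∈ Finset.Ico (k + 1) (k + j + 1), (1 - θ / (θ + (i : ℝ) - 1))) *
    (∑ i ∈ Finset.Ico (k + 1) (k + j + 1),
      (θ / (θ + (i : ℝ) - 1)) / (1 - θ / (θ + (i : ℝ) - 1)))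

open Filter Topology

/-- coefficients -/
noncomputable def Bc (a : ℝ) (n : ℕ) : ℝ := risingFactorial a n / (Nat.factorial n : ℝ)

lemma rf_pos (a : ℝ) (ha : 0 < a) (n : ℕ) : 0 < risingFactorial a n := by
  induction n with
  | zero => simp [risingFactorial]
  | succ n ih => simp only [risingFactorial]; positivity

lemma Bc_pos (a : ℝ) (ha : 0 < a) (n : ℕ) : 0 < Bc a n := by
  have := rf_pos a ha n
  unfold Bc; positivity

lemma Bc_succ (a : ℝ) (n : ℕ) : Bc a (n+1) = Bc a n * ((a + n) / (n + 1)) := by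
  unfold Bc
  simp only [risingFactorial, Nat.factorial_succ]
  push_cast
  have : (Nat.factorial n : ℝ) ≠ 0 := by positivity
  field_simp

lemma rf_shift (a : ℝ) (n : ℕ) : risingFactorial a (n+1) = a * risingFactorial (a+1) n := by
  induction n with
  | zero => simp [risingFactorial]
  | succ n ih =>
    rw [risingFactorial, ih, risingFactorial]; push_cast; ring

lemma Bc_shift (a : ℝ) (n : ℕ) : Bc a (n+1) * (n+1) = a * Bc (a+1) n := by
  unfold Bc
  rw [rf_shift, Nat.factorial_succ]
  push_cast
  have : (Nat.factorial n : ℝ) ≠ 0 := by positivity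
  field_simp

lemma Bc_pascal (a : ℝ) (n : ℕ) : Bc (a+1) (n+1) - Bc (a+1) n = Bc a (n+1) := by
  have h := Bc_shift a n
  have h2 : Bc a (n+1) = a * Bc (a+1) n / (n+1) := by
    rw [← h]; field_simp
  rw [h2, Bc_succ]
  field_simp
  ring

lemma Bc_zero (a : ℝ) : Bc a 0 = 1 := by simp [Bc, risingFactorial]

lemma summ_abs (a : ℝ) (ha : 0 < a) (r : ℝ) (h0 : 0 < r) (h1 : r < 1) :
    Summable (fun n => Bc a n * r ^ n) := by
  apply summable_of_ratio_test_tendsto_lt_one h1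
  · refine Eventually.of_forall fun n => ?_
    have := Bc_pos a ha n
    positivity
  · have : (fun n : ℕ => ‖Bc a (n+1) * r^(n+1)‖ / ‖Bc a n * r^n‖)
        = fun n : ℕ => (1 + (a - 1) * (1 / ((n:ℝ) + 1))) * r := by
      funext n
      have h := Bc_pos a ha n
      have h' := Bc_pos a ha (n+1)
      rw [Real.norm_of_nonneg (by positivity), Real.norm_of_nonneg (by positivity), Bc_succ]
      field_simp
      ring
    rw [this]
    have h := ((tendsto_one_div_add_atTop_nhds_zero_nat (𝕜 := ℝ)).const_mul (a-1)).const_add 1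
    simpa using h.mul_const r

lemma summ (a : ℝ) (ha : 0 < a) (s : ℕ → ℝ) (C : ℝ) (hs : ∀ n, |s n| ≤ C)
    (x : ℝ) (hx : |x| < 1) : Summable (fun n => Bc a n * x ^ n * s n) := by
  obtain ⟨r, hr1, hr2⟩ := exists_between hx
  have hr0 : 0 < r := lt_of_le_of_lt (abs_nonneg x) hr1
  refine Summable.of_norm_bounded ((summ_abs a ha r hr0 hr2).mul_right C) fun n => ?_
  have hB := Bc_pos a ha n
  rw [norm_mul, norm_mul, norm_pow, Real.norm_of_nonneg hB.le, Real.norm_eq_abs, Real.norm_eq_abs]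
  have := hs n
  gcongr

lemma deriv_series (a : ℝ) (ha : 0 < a) (s : ℕ → ℝ) (C : ℝ) (hs : ∀ n, |s n| ≤ C)
    (x : ℝ) (hx : |x| < 1) :
    HasDerivAt (fun x => ∑' n, Bc a n * x ^ n * s n)
      (a * ∑' n, Bc (a+1) n * x ^ n * s (n+1)) x := by
  obtain ⟨r, hr1, hr2⟩ := exists_between hx
  have hr0 : 0 < r := lt_of_le_of_lt (abs_nonneg x) hr1
  have hC : 0 ≤ C := (abs_nonneg _).trans (hs 0)
  let u : ℕ → ℝ := fun n => Bc a n * (n * r ^ (n-1)) * C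
  have hu : Summable u := by
    rw [← summable_nat_add_iff 1]
    refine (((summ_abs (a+1) (by linarith) r hr0 hr2).mul_left a).mul_right C).congr fun n => ?_
    have := Bc_shift a n
    simp only [u, Nat.add_sub_cancel]
    push_cast
    linear_combination (-r^n*C) * this
  have key := hasDerivAt_tsum_of_isPreconnected (g := fun n x => Bc a n * x ^ n * s n)
    (g' := fun n x => Bc a n * (n * x ^ (n-1)) * s n) (u := u) (t := Metric.ball (0:ℝ) r)
    (y₀ := x) (y := x) hu Metric.isOpen_ball
    (convex_ball (0:ℝ) r).isPreconnected
    (fun n y _ => ((hasDerivAt_pow n y).const_mul _).mul_const _)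
    (fun n y hy => by
      have hy' : |y| ≤ r := by simpa using (mem_ball_zero_iff.1 hy).le
      have hB := Bc_pos a ha n
      rw [norm_mul, norm_mul, norm_mul, norm_pow, Real.norm_of_nonneg hB.le, Real.norm_eq_abs,
        Real.norm_eq_abs, Real.norm_eq_abs, Nat.abs_cast]
      have := hs n
      simp only [u]
      gcongr)
    (by simpa using hr1) (summ a ha s C hs x hx) (by simpa using hr1)
  refine key.congr_deriv ?_
  rw [Summable.tsum_eq_zero_add]
  · simp only [Nat.cast_zero, zero_mul, mul_zero, zero_add, ← tsum_mul_left]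
    congr 1; funext n
    have := Bc_shift a n
    simp only [Nat.add_sub_cancel]
    push_cast
    linear_combination (x^n*s (n+1)) * this
  · rw [← summable_nat_add_iff 1]
    refine ((summ (a+1) (by linarith) (fun n => s (n+1)) C (fun n => hs _) x hx).mul_left a).congr
      fun n => ?_
    have := Bc_shift a n
    simp only [Nat.add_sub_cancel]
    push_cast
    linear_combination (-x^n*s (n+1)) * this

/-- the function -/
noncomputable def Wf (a : ℝ) (s : ℕ → ℝ) (x : ℝ) : ℝ :=
  (1 - x) ^ a * ∑' n, Bc a n * x ^ n * s n

lemma deriv_W (a : ℝ) (ha : 0 < a) (s : ℕ → ℝ) (C : ℝ) (hs : ∀ n, |s n| ≤ C)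
    (x : ℝ) (hx : |x| < 1) :
    HasDerivAt (Wf a s)
      (a * (1 - x) ^ (a - 1) * ∑' n, Bc (a+1) n * x ^ n * (s (n+1) - s n)) x := by
  have hx1 : 0 < 1 - x := by have := (abs_lt.1 hx).2; linarith
  have h1 : HasDerivAt (fun x : ℝ => (1 - x) ^ a) (-1 * a * (1-x)^(a-1)) x :=
    ((hasDerivAt_id x).const_sub 1).rpow_const (Or.inl hx1.ne')
  have h2 := h1.mul (deriv_series a ha s C hs x hx)
  have hS1 := summ (a+1) (by linarith) s C hs x hx
  have hS2 := summ (a+1) (by linarith) (fun n => s (n+1)) C (fun n => hs _) x hx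
  have hS0 := summ a ha s C hs x hx
  have e1 : ∑' n, Bc (a+1) n * x ^ n * (s (n+1) - s n)
      = ∑' n, Bc (a+1) n * x ^ n * s (n+1) - ∑' n, Bc (a+1) n * x ^ n * s n := by
    rw [← hS2.tsum_sub hS1]
    congr 1; funext n; ring
  have e2 : ∑' n, Bc a n * x ^ n * s n
      = ∑' n, Bc (a+1) n * x ^ n * s n - x * ∑' n, Bc (a+1) n * x ^ n * s (n+1) := by
    rw [hS0.tsum_eq_zero_add, hS1.tsum_eq_zero_add, ← tsum_mul_left, add_sub_assoc,
      ← Summable.tsum_sub ((summable_nat_add_iff 1).2 hS1) (hS2.mul_left x), Bc_zero, Bc_zero]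
    congr 1; congr 1; funext n
    rw [← Bc_pascal]; ring
  have e3 : (1 - x) ^ a = (1-x)^(a-1) * (1-x) := by
    rw [Real.rpow_sub_one hx1.ne']; field_simp
  refine h2.congr_deriv ?_
  rw [e1, e3, e2]
  ring

lemma W_one (a : ℝ) (ha : 0 < a) (x : ℝ) (h0 : 0 ≤ x) (h1 : x < 1) :
    Wf a (fun _ => 1) x = 1 := by
  have hd : ∀ y ∈ Set.Icc 0 x, HasDerivAt (Wf a (fun _ => 1)) 0 y := by
    intro y hy
    have := deriv_W a ha (fun _ => 1) 1 (by simp) y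
      (by rw [abs_lt]; constructor <;> linarith [hy.1, hy.2])
    simpa using this
  have := constant_of_has_deriv_right_zero (f := Wf a (fun _ => 1)) (a := 0) (b := x)
    (fun y hy => (hd y hy).continuousAt.continuousWithinAt)
    (fun y hy => (hd y ⟨hy.1, hy.2.le⟩).hasDerivWithinAt) x ⟨h0, le_rfl⟩
  rw [this, Wf, tsum_eq_single 0]
  · simp [Bc_zero]
  · intro n hn; simp [hn]

lemma unimodal_aux (a : ℝ) (ha : 0 < a) (s : ℕ → ℝ) (hs0 : s 0 = 0) (hs : ∀ n, 0 ≤ s n)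
    (hlim : Tendsto s atTop (𝓝 0)) (m : ℕ) (hm1 : ∀ j < m, s j ≤ s (j+1))
    (hm2 : ∀ j, m ≤ j → s (j+1) ≤ s j) :
    ∃ xs ∈ Set.Ico (0:ℝ) 1, MonotoneOn (Wf a s) (Set.Icc 0 xs) ∧
      AntitoneOn (Wf a s) (Set.Ico xs 1) := by
  obtain ⟨C, hC⟩ : ∃ C, ∀ n, |s n| ≤ C := by
    obtain ⟨C, hC⟩ := hlim.bddAbove_range
    exact ⟨C, fun n => by rw [abs_of_nonneg (hs n)]; exact hC ⟨n, rfl⟩⟩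
  set g : ℝ → ℝ := fun x => ∑' n, Bc (a+1) n * x ^ n * (s (n+1) - s n) with hg
  have habs : ∀ x : ℝ, 0 ≤ x → x < 1 → |x| < 1 := fun x h0 h1 => by rwa [abs_of_nonneg h0]
  have hD : ∀ x : ℝ, 0 ≤ x → x < 1 → HasDerivAt (Wf a s) (a * (1 - x) ^ (a - 1) * g x) x :=
    fun x h0 h1 => deriv_W a ha s C hC x (habs x h0 h1)
  have hpos : ∀ x : ℝ, x < 1 → 0 < a * (1 - x) ^ (a - 1) := fun x h =>
    mul_pos ha (Real.rpow_pos_of_pos (by linarith) _)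
  have hgS : ∀ x : ℝ, 0 ≤ x → x < 1 →
      Summable fun n => Bc (a+1) n * x ^ n * (s (n+1) - s n) := fun x h0 h1 =>
    summ (a+1) (by linarith) (fun n => s (n+1) - s n) (C + C)
      (fun n => (abs_sub _ _).trans (add_le_add (hC _) (hC _))) x (habs x h0 h1)
  have hgmono : ∀ x y : ℝ, 0 < x → x ≤ y → y < 1 → g x ≤ 0 → g y ≤ 0 := by
    intro x y h0 hxy h1 hgx
    have h0y : 0 < y := h0.trans_le hxy
    have hle : g y ≤ (y/x)^m * g x := by
      simp only [hg]
      rw [← tsum_mul_left]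
      refine (hgS y h0y.le h1).tsum_le_tsum (fun n => ?_)
        ((hgS x h0.le (hxy.trans_lt h1)).mul_left _)
      have hB := Bc_pos (a+1) (by linarith) n
      have hq : 1 ≤ y / x := by rw [le_div_iff₀ h0]; linarith
      have e : y ^ n = (y/x)^n * x^n := by rw [← mul_pow]; congr 1; field_simp
      have hk : (y/x)^n * (s (n+1) - s n) ≤ (y/x)^m * (s (n+1) - s n) := by
        rcases lt_or_ge n m with h | h
        · exact mul_le_mul_of_nonneg_right (pow_le_pow_right₀ hq h.le)
            (by linarith [hm1 n h])
        · exact mul_le_mul_of_nonpos_right (pow_le_pow_right₀ hq h)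
            (by linarith [hm2 n h])
      have := mul_le_mul_of_nonneg_left hk (by positivity : 0 ≤ Bc (a+1) n * x^n)
      rw [e]; linarith
    have : (y/x)^m * g x ≤ 0 := mul_nonpos_of_nonneg_of_nonpos (by positivity) hgx
    linarith
  have hW0 : Wf a s 0 = 0 := by
    rw [Wf, tsum_eq_single 0]
    · simp [hs0]
    · intro n hn; simp [hn]
  have hcont : ContinuousOn (Wf a s) (Set.Ico 0 1) := fun x hx =>
    (hD x hx.1 hx.2).continuousAt.continuousWithinAt
  have hex : ∃ x, 0 < x ∧ x < 1 ∧ g x ≤ 0 := by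
    by_contra! hcon
    have hmono : StrictMonoOn (Wf a s) (Set.Ico 0 1) := by
      refine strictMonoOn_of_deriv_pos (convex_Ico 0 1) hcont fun x hx => ?_
      rw [interior_Ico] at hx
      rw [(hD x hx.1.le hx.2).deriv]
      exact mul_pos (hpos x hx.2) (hcon x hx.1 hx.2)
    have hhalf : 0 < Wf a s (1/2) := by
      rw [← hW0]; exact hmono ⟨le_rfl, one_pos⟩ ⟨by norm_num, by norm_num⟩ (by norm_num)
    set ε := Wf a s (1/2) / 2 with hε
    have hεp : 0 < ε := by positivity
    obtain ⟨J, hJ⟩ := eventually_atTop.1 (hlim.eventually (eventually_lt_nhds hεp))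
    set K := ∑ n ∈ Finset.range J, Bc a n * C
    have hC0 : 0 ≤ C := (abs_nonneg _).trans (hC 0)
    have hb : ∀ x : ℝ, 0 ≤ x → x < 1 → Wf a s x ≤ ε + (1-x)^a * K := by
      intro x h0 h1
      have hS0 := summ a ha s C hC x (habs x h0 h1)
      have hSo := summ a ha (fun _ => 1) 1 (by simp) x (habs x h0 h1)
      have hone := W_one a ha x h0 h1
      have hfin : HasSum (fun n => if n ∈ Finset.range J then Bc a n * C else 0) K := by
        have h5 : ∑ n ∈ Finset.range J, (if n ∈ Finset.range J then Bc a n * C else 0) = K :=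
          Finset.sum_congr rfl fun n hn => by simp only [if_pos hn]
        rw [← h5]
        exact hasSum_sum_of_ne_finset_zero (fun n hn => by simp only [if_neg hn])
      have hle : ∑' n, Bc a n * x ^ n * s n ≤ ε * (∑' n, Bc a n * x ^ n * 1) + K := by
        rw [← tsum_mul_left, ← hfin.tsum_eq, ← (hSo.mul_left ε).tsum_add hfin.summable]
        refine hS0.tsum_le_tsum (fun n => ?_) ((hSo.mul_left ε).add hfin.summable)
        have hB := Bc_pos a ha n
        have hxn : 0 ≤ x ^ n := by positivity
        have hxn1 : x ^ n ≤ 1 := pow_le_one₀ h0 h1.le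
        split_ifs with h
        · have h3 : Bc a n * x^n * s n ≤ Bc a n * 1 * C := by
            have := (le_abs_self _).trans (hC n)
            have := hs n
            gcongr
          have h4 : 0 ≤ ε * (Bc a n * x^n * 1) := by positivity
          linarith
        · have h3 := (hJ n (by simpa using h)).le
          have : Bc a n * x^n * s n ≤ Bc a n * x^n * ε := by gcongr
          linarith
      have hp : 0 ≤ (1-x)^a := Real.rpow_nonneg (by linarith) _
      have := mul_le_mul_of_nonneg_left hle hp
      rw [Wf] at hone ⊢
      calc _ ≤ _ := this
        _ = ε * ((1-x)^a * (∑' n, Bc a n * x ^ n * 1)) + (1-x)^a * K := by ring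
        _ = _ := by rw [hone, mul_one]
    have ht : Tendsto (fun x : ℝ => ε + (1-x)^a * K) (𝓝[<] 1) (𝓝 (ε + (1-1)^a * K)) := by
      have : ContinuousAt (fun x : ℝ => ε + (1-x)^a * K) 1 := by
        have : ContinuousAt (fun x : ℝ => (1-x)^a) 1 :=
          (continuousAt_const.sub continuousAt_id).rpow_const (Or.inr ha.le)
        exact continuousAt_const.add (this.mul continuousAt_const)
      exact this.tendsto.mono_left nhdsWithin_le_nhds
    have hge : 2 * ε ≤ ε + (1-1)^a * K := by
      refine ge_of_tendsto ht ?_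
      filter_upwards [Ioo_mem_nhdsLT (show (1/2:ℝ) < 1 by norm_num)] with x hx
      have h1 := hb x (by linarith [hx.1]) hx.2
      have h2 := hmono.monotoneOn (show (1/2:ℝ) ∈ Set.Ico 0 1 by norm_num)
        ⟨by linarith [hx.1], hx.2⟩ hx.1.le
      linarith
    rw [sub_self, Real.zero_rpow ha.ne'] at hge
    linarith
  obtain ⟨x0, hx0, hx01, hgx0⟩ := hex
  set S : Set ℝ := {x | 0 < x ∧ x < 1 ∧ g x ≤ 0}
  have hbdd : BddBelow S := ⟨0, fun x hx => hx.1.le⟩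
  have hne : S.Nonempty := ⟨x0, hx0, hx01, hgx0⟩
  have hxs0 : 0 ≤ sInf S := le_csInf hne fun x hx => hx.1.le
  have hxs1 : sInf S < 1 := (csInf_le hbdd ⟨hx0, hx01, hgx0⟩).trans_lt hx01
  refine ⟨sInf S, ⟨hxs0, hxs1⟩, ?_, ?_⟩
  · refine monotoneOn_of_deriv_nonneg (convex_Icc _ _)
      (hcont.mono fun x hx => ⟨hx.1, hx.2.trans_lt hxs1⟩) ?_ ?_
    · intro x hx
      rw [interior_Icc] at hx
      exact (hD x hx.1.le (hx.2.trans hxs1)).differentiableAt.differentiableWithinAt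
    · intro x hx
      rw [interior_Icc] at hx
      have hx1 := hx.2.trans hxs1
      rw [(hD x hx.1.le hx1).deriv]
      refine mul_nonneg (hpos x hx1).le ?_
      by_contra! h
      exact absurd (csInf_le hbdd (show x ∈ S from ⟨hx.1, hx1, h.le⟩)) (not_le.2 hx.2)
  · refine antitoneOn_of_deriv_nonpos (convex_Ico _ _)
      (hcont.mono fun x hx => ⟨hxs0.trans hx.1, hx.2⟩) ?_ ?_
    · intro x hx
      rw [interior_Ico] at hx
      exact (hD x (hxs0.trans hx.1.le) hx.2).differentiableAt.differentiableWithinAt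
    · intro x hx
      rw [interior_Ico] at hx
      rw [(hD x (hxs0.trans hx.1.le) hx.2).deriv]
      refine mul_nonpos_of_nonneg_of_nonpos (hpos x hx.2).le ?_
      obtain ⟨y, hy, hyx⟩ := exists_lt_of_csInf_lt hne hx.1
      exact hgmono y x hy.1 hyx.le hx.2 hy.2.2

lemma s1_facts (θ : ℝ) (hθ : 0 < θ) (k : ℕ) (hk : 1 ≤ k) :
    s1 θ k 0 = 0 ∧ (∀ n, 0 ≤ s1 θ k n) ∧ Tendsto (s1 θ k) atTop (𝓝 0) ∧
    ∃ m, (∀ j < m, s1 θ k j ≤ s1 θ k (j+1)) ∧ (∀ j, m ≤ j → s1 θ k (j+1) ≤ s1 θ k j) := by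
  set P : ℕ → ℝ := fun j => ∏ i ∈ Finset.Ico (k + 1) (k + j + 1), (1 - θ / (θ + (i : ℝ) - 1))
    with hP
  set R : ℕ → ℝ := fun j => ∑ i ∈ Finset.Ico (k + 1) (k + j + 1),
      (θ / (θ + (i : ℝ) - 1)) / (1 - θ / (θ + (i : ℝ) - 1)) with hR
  have hs : ∀ j, s1 θ k j = P j * R j := fun j => rfl
  set y : ℕ → ℝ := fun j => θ / (k + j) with hy
  have hk' : (1:ℝ) ≤ k := by exact_mod_cast hk
  have hyp : ∀ j, 0 < y j := fun j => by simp only [hy]; positivity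
  have hyle : ∀ j, y j ≤ θ := fun j => by
    simp only [hy]
    have : (0:ℝ) ≤ j := by positivity
    exact div_le_self hθ.le (by linarith)
  have hP0 : P 0 = 1 := by simp [hP]
  have hR0 : R 0 = 0 := by simp [hR]
  have h1p : ∀ j : ℕ, 1 - θ / (θ + ((k + j + 1 : ℕ) : ℝ) - 1) = 1 / (1 + y j) := fun j => by
    have : (0:ℝ) < k + j := by positivity
    simp only [hy]; push_cast
    have h2 : θ + ((k:ℝ) + j + 1) - 1 = θ + (k + j) := by ring
    rw [h2]
    have : θ + ((k:ℝ) + j) ≠ 0 := by positivity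
    field_simp
    ring
  have hpp : ∀ j : ℕ, θ / (θ + ((k + j + 1 : ℕ) : ℝ) - 1) = y j / (1 + y j) := fun j => by
    have h := h1p j
    have := hyp j
    have h3 : y j / (1 + y j) = 1 - 1 / (1 + y j) := by field_simp; ring
    rw [h3]; linarith
  have hPs : ∀ j, P (j+1) = P j * (1 / (1 + y j)) := fun j => by
    simp only [hP]
    rw [← add_assoc, Finset.prod_Ico_succ_top (by omega), h1p]
  have hRs : ∀ j, R (j+1) = R j + y j := fun j => by
    simp only [hR]
    rw [← add_assoc, Finset.sum_Ico_succ_top (by omega), h1p, hpp]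
    have := hyp j
    congr 1
    field_simp
  have hPp : ∀ j, 0 < P j := fun j => by
    induction j with
    | zero => simp [hP0]
    | succ j ih => rw [hPs]; have := hyp j; positivity
  have hRn : ∀ j, 0 ≤ R j := fun j => by
    induction j with
    | zero => simp [hR0]
    | succ j ih => rw [hRs]; have := hyp j; positivity
  have hRm : Monotone R := monotone_nat_of_le_succ fun j => by rw [hRs]; linarith [hyp j]
  have hdiff : ∀ j, s1 θ k (j+1) - s1 θ k j = P j * (y j / (1 + y j)) * (1 - R j) := fun j => by
    rw [hs, hs, hPs, hRs]
    have := hyp j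
    field_simp
    ring
  have hRt : Tendsto R atTop atTop := by
    have hRe : R = fun n => ∑ j ∈ Finset.range n, y j := by
      funext n
      induction n with
      | zero => simp [hR0]
      | succ n ih => rw [hRs, ih, Finset.sum_range_succ]
    rw [hRe, ← not_summable_iff_tendsto_nat_atTop_of_nonneg (fun j => (hyp j).le)]
    intro h
    have h2 : Summable (fun n : ℕ => 1 / ((n + k : ℕ) : ℝ)) := by
      refine (h.mul_left θ⁻¹).congr fun n => ?_
      simp only [hy]; push_cast
      have : (0:ℝ) < k + n := by positivity
      rw [add_comm (n:ℝ)]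
      field_simp
    exact Real.not_summable_one_div_natCast ((summable_nat_add_iff k).1 h2)
  have hkey : ∀ j, P j * (1 + R j / (2 + θ))^2 ≤ 1 := fun j => by
    induction j with
    | zero => simp [hP0, hR0]
    | succ j ih =>
      rw [hPs, hRs]
      have h1 := hyp j
      have h2 := hyle j
      have h3 := hRn j
      set t := y j / (2 + θ) with ht
      have hyt : y j = t * (2 + θ) := by rw [ht]; field_simp
      have ht0 : 0 < t := by positivity
      have htq : (1 + t)^2 ≤ 1 + y j := by
        have : t ≤ θ := (div_le_self h1.le (by linarith)).trans h2
        rw [hyt]; nlinarith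
      have hb : 1 + (R j + y j) / (2 + θ) ≤ (1 + R j / (2 + θ)) * (1 + t) := by
        rw [add_div, ← ht]
        have : 0 ≤ R j / (2 + θ) := by positivity
        nlinarith
      have hpj := hPp j
      calc P j * (1 / (1 + y j)) * (1 + (R j + y j) / (2 + θ))^2
          ≤ P j * (1 / (1 + y j)) * ((1 + R j / (2 + θ)) * (1 + t))^2 := by gcongr
        _ = (P j * (1 + R j / (2 + θ))^2) * ((1+t)^2 / (1 + y j)) := by ring
        _ ≤ 1 * 1 := by
          gcongr
          rw [div_le_one (by positivity)]; exact htq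
        _ = 1 := one_mul 1
  have hsn : ∀ n, 0 ≤ s1 θ k n := fun n => by
    rw [hs]; exact mul_nonneg (hPp n).le (hRn n)
  refine ⟨by rw [hs, hR0, mul_zero], hsn, ?_, ?_⟩
  · have hup : Tendsto (fun n => (2+θ)^2 / R n) atTop (𝓝 0) := hRt.const_div_atTop _
    refine tendsto_of_tendsto_of_tendsto_of_le_of_le' tendsto_const_nhds hup
      (Eventually.of_forall hsn) ?_
    filter_upwards [hRt.eventually_gt_atTop 0] with n hn
    rw [hs, le_div_iff₀ hn]
    have h1 := hkey n
    have h2 := hPp n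
    have h3 : P n * (R n / (2+θ))^2 ≤ 1 := by
      refine le_trans ?_ h1
      gcongr
      linarith
    rw [div_pow, mul_div_assoc', div_le_one (by positivity)] at h3
    linarith
  · have hex : ∃ n, 1 < R n := (hRt.eventually_gt_atTop 1).exists
    classical
    refine ⟨Nat.find hex, fun j hj => ?_, fun j hj => ?_⟩
    · have h := Nat.find_min hex hj
      rw [not_lt] at h
      have h2 := hdiff j
      have h3 := hPp j
      have h4 := hyp j
      have : 0 ≤ P j * (y j / (1 + y j)) * (1 - R j) := mul_nonneg (by positivity) (by linarith)
      linarith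
    · have h := (Nat.find_spec hex).trans_le (hRm hj)
      have h2 := hdiff j
      have h3 := hPp j
      have h4 := hyp j
      have : P j * (y j / (1 + y j)) * (1 - R j) ≤ 0 :=
        mul_nonpos_of_nonneg_of_nonpos (by positivity) (by linarith)
      linarith

/-- `W₁(x,k) = (1-x)^{k+ν} ∑_{j≥0} ((ν+k)_j/j!) xʲ s₁(k+1,k+j)` is unimodal
on `[0,1)`. -/
theorem stmt8 (θ ν : ℝ) (hθ : 0 < θ) (hν : 0 < ν) (k : ℕ) (hk : 1 ≤ k) :
    ∃ xstar ∈ Set.Ico (0 : ℝ) 1,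
      MonotoneOn
        (fun x : ℝ => (1 - x) ^ ((k : ℝ) + ν) *
          ∑' j : ℕ, risingFactorial (ν + k) j / (Nat.factorial j : ℝ) * x ^ j *
            s1 θ k j)
        (Set.Icc 0 xstar) ∧
      AntitoneOn
        (fun x : ℝ => (1 - x) ^ ((k : ℝ) + ν) *
          ∑' j : ℕ, risingFactorial (ν + k) j / (Nat.factorial j : ℝ) * x ^ j *
            s1 θ k j)
        (Set.Ico xstar 1) := by
  obtain ⟨h0, h1, h2, m, h3, h4⟩ := s1_facts θ hθ k hk
  have := unimodal_aux (ν + k) (by positivity) (s1 θ k) h0 h1 h2 m h3 h4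
  rw [add_comm (k : ℝ) ν]
  exact this
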